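/- The Hessian determinant of F_{-2} satisfies H_{-2}(x, y, z) = 216·z·q(x, y, z) for all (x, y, z), where q(x, y, z) = x² + y² + (z - x - y)² - xy - x(z - x - y) - y(z - x - y). Consequently, in the affine chart z = 1, H_{-2}(x, y, 1) ≥ 0 for all (x, y), with equality if and only if (x, y) = (1/3, 1/3). -/

import Mathlib

noncomputable section

/-- The cubic form `F k (x,y,z) = -x^3 - y^3 - (z-x-y)^3 + 3k x y (z-x-y)`. -/
def F (k x y z : ℝ) : ℝ := -x^3 - y^3 - (z - x - y)^3 + 3*k*x*y*(z - x - y)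

/-- Partial derivative with respect to the first variable. -/
def pdx (f : ℝ → ℝ → ℝ → ℝ) (x y z : ℝ) : ℝ := deriv (fun t => f t y z) x

/-- Partial derivative with respect to the second variable. -/
def pdy (f : ℝ → ℝ → ℝ → ℝ) (x y z : ℝ) : ℝ := deriv (fun t => f x t z) y

/-- Partial derivative with respect to the third variable. -/
def pdz (f : ℝ → ℝ → ℝ → ℝ) (x y z : ℝ) : ℝ := deriv (fun t => f x y t) z

/-- The Hessian determinant of a function of three real variables: the determinant of
the 3×3 matrix of its second partial derivatives. -/
def hessDet (f : ℝ → ℝ → ℝ → ℝ) (x y z : ℝ) : ℝ :=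
  !![pdx (pdx f) x y z, pdy (pdx f) x y z, pdz (pdx f) x y z;
     pdx (pdy f) x y z, pdy (pdy f) x y z, pdz (pdy f) x y z;
     pdx (pdz f) x y z, pdy (pdz f) x y z, pdz (pdz f) x y z].det

/-- The gradient of a function of three real variables. -/
def grad (f : ℝ → ℝ → ℝ → ℝ) (x y z : ℝ) : ℝ × ℝ × ℝ :=
  (pdx f x y z, pdy f x y z, pdz f x y z)

/-- The dot product on `ℝ × ℝ × ℝ`. -/
def dot (a b : ℝ × ℝ × ℝ) : ℝ := a.1 * b.1 + a.2.1 * b.2.1 + a.2.2 * b.2.2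

/-- The quadratic form `q`. -/
def q (x y z : ℝ) : ℝ :=
  x^2 + y^2 + (z - x - y)^2 - x*y - x*(z - x - y) - y*(z - x - y)

/-!
In the coordinates `a = x`, `b = y`, `c = z - x - y`, reached by a substitution of determinant
one, `F k` is the Hesse cubic `-(a³ + b³ + c³) + 3kabc`, whose Hessian determinant
`54k²(a³ + b³ + c³) + (54k³ - 216)abc` is again a combination of `a³ + b³ + c³` and `abc`.
At `k = -2` it is `216(a³ + b³ + c³ - 3abc)`, which splits off the factor `a + b + c = z`.
The other factor `q` is half the sum of the squares of the differences of `a, b, c`, so it is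
nonnegative and vanishes only for `a = b = c = z / 3`.
-/

/-- The matrix of second partial derivatives of a function of three real variables, whose
determinant is `hessDet`. The row is the variable differentiated first. -/
def hessian (f : ℝ → ℝ → ℝ → ℝ) (x y z : ℝ) : Matrix (Fin 3) (Fin 3) ℝ :=
  !![pdx (pdx f) x y z, pdy (pdx f) x y z, pdz (pdx f) x y z;
     pdx (pdy f) x y z, pdy (pdy f) x y z, pdz (pdy f) x y z;
     pdx (pdz f) x y z, pdy (pdz f) x y z, pdz (pdz f) x y z]

/-- The Hessian matrix of the Hesse cubic `-a³ - b³ - c³ + 3kabc` at `(a, b, c)`. -/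
def hesseMatrix {R : Type*} [CommRing R] (k a b c : R) : Matrix (Fin 3) (Fin 3) R :=
  !![-6 * a, 3 * k * c, 3 * k * b;
     3 * k * c, -6 * b, 3 * k * a;
     3 * k * b, 3 * k * a, -6 * c]

/-- The matrix of the substitution `(x, y, z) ↦ (x, y, z - x - y)` that takes the Hesse cubic
to `F`. -/
def shearMatrix (R : Type*) [CommRing R] : Matrix (Fin 3) (Fin 3) R :=
  !![1, 0, 0;
     0, 1, 0;
     -1, -1, 1]

theorem det_shearMatrix (R : Type*) [CommRing R] : (shearMatrix R).det = 1 := by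
  simp [shearMatrix, Matrix.det_fin_three]

theorem det_hesseMatrix {R : Type*} [CommRing R] (k a b c : R) :
    (hesseMatrix k a b c).det =
      54 * k ^ 2 * (a ^ 3 + b ^ 3 + c ^ 3) + (54 * k ^ 3 - 216) * (a * b * c) := by
  simp only [hesseMatrix, Matrix.det_fin_three, Matrix.of_apply, Matrix.cons_val]
  ring

theorem pdx_F (k : ℝ) :
    pdx (F k) = fun x y z => 3 * ((z - x - y) ^ 2 - x ^ 2) + 3 * k * y * (z - x - y - x) := by
  funext x y z
  simp (disch := fun_prop) only [pdx, F, deriv_fun_add, deriv_fun_sub, deriv_fun_mul,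
    deriv_fun_pow, deriv.fun_neg', deriv_const', deriv_id'', deriv_const_sub_id',
    deriv_const_mul_id']
  ring

theorem pdy_F (k : ℝ) :
    pdy (F k) = fun x y z => 3 * ((z - x - y) ^ 2 - y ^ 2) + 3 * k * x * (z - x - y - y) := by
  funext x y z
  simp (disch := fun_prop) only [pdy, F, deriv_fun_add, deriv_fun_sub, deriv_fun_mul,
    deriv_fun_pow, deriv_const', deriv_id'', deriv_const_sub_id', deriv_const_mul_id']
  ring

theorem pdz_F (k : ℝ) :
    pdz (F k) = fun x y z => -3 * (z - x - y) ^ 2 + 3 * k * x * y := by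
  funext x y z
  simp (disch := fun_prop) only [pdz, F, deriv_fun_add, deriv_fun_sub, deriv_fun_mul,
    deriv_fun_pow, deriv_const', deriv_id'']
  ring

theorem hessian_F (k x y z : ℝ) :
    hessian (F k) x y z =
      (shearMatrix ℝ).transpose * hesseMatrix k x y (z - x - y) * shearMatrix ℝ := by
  simp only [hessian, pdx_F, pdy_F, pdz_F]
  simp (disch := fun_prop) only [pdx, pdy, pdz, deriv_fun_add, deriv_fun_sub, deriv_fun_mul,
    deriv_fun_pow, deriv_const', deriv_id'', deriv_const_sub_id', deriv_const_mul_id']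
  ext i j
  fin_cases i <;> fin_cases j <;>
    simp only [shearMatrix, hesseMatrix, Matrix.mul_apply, Matrix.transpose_apply,
      Fin.sum_univ_three, Fin.zero_eta, Fin.mk_one, Fin.reduceFinMk, Matrix.of_apply,
      Matrix.cons_val] <;>
    ring

theorem hessDet_F (k x y z : ℝ) :
    hessDet (F k) x y z =
      54 * k ^ 2 * (x ^ 3 + y ^ 3 + (z - x - y) ^ 3) +
        (54 * k ^ 3 - 216) * (x * y * (z - x - y)) :=
  calc hessDet (F k) x y z = (hessian (F k) x y z).det := rfl
    _ = (hesseMatrix k x y (z - x - y)).det := by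
      rw [hessian_F, Matrix.det_mul, Matrix.det_mul, Matrix.det_transpose, det_shearMatrix,
        one_mul, mul_one]
    _ = _ := det_hesseMatrix k x y (z - x - y)

theorem hessDet_F_neg_two (x y z : ℝ) : hessDet (F (-2)) x y z = 216 * z * q x y z :=
  calc
    hessDet (F (-2)) x y z =
        216 * (x ^ 3 + y ^ 3 + (z - x - y) ^ 3 - 3 * x * y * (z - x - y)) := by
      rw [hessDet_F]
      ring
    _ = 216 * z * q x y z := by
      rw [q]
      ring

theorem two_mul_q_eq_sum_sq (x y z : ℝ) :
    2 * q x y z = (x - y) ^ 2 + (x - (z - x - y)) ^ 2 + (y - (z - x - y)) ^ 2 := by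
  rw [q]
  ring

theorem q_nonneg (x y z : ℝ) : 0 ≤ q x y z := by
  have : 0 ≤ 2 * q x y z := by rw [two_mul_q_eq_sum_sq]; positivity
  linarith

theorem q_eq_zero_iff (x y z : ℝ) : q x y z = 0 ↔ x = z / 3 ∧ y = z / 3 := by
  constructor
  · intro hq
    have squares_eq_zero :
        (x - y) ^ 2 + (x - (z - x - y)) ^ 2 + (y - (z - x - y)) ^ 2 = 0 := by
      rw [← two_mul_q_eq_sum_sq, hq, mul_zero]
    obtain ⟨hxy, hxw⟩ : x - y = 0 ∧ x - (z - x - y) = 0 := by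
      rw [← sq_eq_zero_iff, ← sq_eq_zero_iff (a := x - (z - x - y))]
      constructor <;> linarith only [squares_eq_zero, sq_nonneg (x - y),
        sq_nonneg (x - (z - x - y)), sq_nonneg (y - (z - x - y))]
    constructor <;> linarith
  · rintro ⟨rfl, rfl⟩
    rw [q]
    ring

theorem stmt_13 :
    (∀ x y z : ℝ, hessDet (F (-2)) x y z = 216*z*q x y z) ∧
    (∀ x y : ℝ, 0 ≤ hessDet (F (-2)) x y 1 ∧
      (hessDet (F (-2)) x y 1 = 0 ↔ (x, y) = ((1:ℝ)/3, (1:ℝ)/3))) := by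
  refine ⟨hessDet_F_neg_two, fun x y => ?_⟩
  have chart : hessDet (F (-2)) x y 1 = 216 * q x y 1 := by
    rw [hessDet_F_neg_two, mul_one]
  rw [chart]
  constructor
  · exact mul_nonneg (by norm_num) (q_nonneg x y 1)
  · rw [mul_eq_zero_iff_left (by norm_num), q_eq_zero_iff, Prod.mk.injEq]
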